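/- arXiv:2209.12246 — 2 statements merged into one kernel-verified Lean document; each statement's English description precedes it below -/
import Mathlib

section
/- Let Ω be a class of unital C*-algebras and let A be a finite, infinite-dimensional, simple, unital C*-algebra. If A belongs to the class TAΩ (Elliott–Niu tracial approximation by algebras in Ω), then A belongs to the class GTAΩ. -/
open Filter Topology

/-- An element of a C*-algebra is positive if it is of the form `x* x`. -/
def IsPos {A : Type*} [Mul A] [Star A] (a : A) : Prop := ∃ x : A, a = star x * x

/-- Cuntz subequivalence `a ≾_A b`. -/
def CuntzBelow {A : Type*} [NonUnitalNormedRing A] [Star A] (a b : A) : Prop :=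
  ∃ v : ℕ → A, Tendsto (fun n => ‖v n * b * star (v n) - a‖) atTop (nhds 0)

/-- `x ∈_ε S`: `x` lies within `ε` of the set `S`. -/
def ApproxIn {A : Type*} [NormedAddGroup A] (x : A) (S : Set A) (ε : ℝ) : Prop :=
  ∃ y ∈ S, ‖x - y‖ < ε

/-- `(a - ε)₊`, via continuous functional calculus. -/
noncomputable def CutPos {A : Type*} [CStarAlgebra A] (a : A) (ε : ℝ) : A :=
  cfc (fun t : ℝ => max (t - ε) 0) a

/-- A C*-algebra is simple if it is nontrivial and has no proper nontrivial
closed two-sided ideals. -/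
def IsSimpleCStarAlgebra (A : Type*) [NonUnitalNormedRing A] : Prop :=
  Nontrivial A ∧ ∀ I : TwoSidedIdeal A, IsClosed (I : Set A) →
    (I : Set A) = {0} ∨ (I : Set A) = Set.univ

variable {A : Type*} [CStarAlgebra A]

/-- Membership in the class `WTAΩ` (Elliott–Fan–Fang weak tracial approximation),
where the class `Ω` is modelled as a set of (C*-)subalgebras of `A`. -/
def MemWTA (Ω : Set (NonUnitalStarSubalgebra ℂ A)) : Prop :=
  ∀ ε : ℝ, 0 < ε → ∀ F : Finset A, ∀ a : A, IsPos a → a ≠ 0 →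
    ∃ B ∈ Ω, IsClosed (B : Set A) ∧
      ∃ p ∈ B, IsSelfAdjoint p ∧ p * p = p ∧ (∀ b ∈ B, p * b = b ∧ b * p = b) ∧
        ∃ g ∈ B, IsPos g ∧ IsPos (1 - g) ∧
          (∀ x ∈ F, ApproxIn ((p - g) * x) (B : Set A) ε ∧
            ApproxIn (x * (p - g)) (B : Set A) ε) ∧
          (∀ x ∈ F, ‖(p - g) * x - x * (p - g)‖ < ε) ∧
          CuntzBelow (1 - (p - g)) a ∧
          ‖a‖ - ε ≤ ‖(p - g) * a * (p - g)‖

/-- Membership in the class `GTAΩ` (generalized/weak tracial approximation),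
where the class `Ω` is modelled as a set of (C*-)subalgebras of `A`. -/
def MemGTA (Ω : Set (NonUnitalStarSubalgebra ℂ A)) : Prop :=
  ∀ ε : ℝ, 0 < ε → ∀ F : Finset A, ∀ a b : A, IsPos a → ‖a‖ = 1 → IsPos b → ‖b‖ ≤ 1 →
    ∃ B ∈ Ω, IsClosed (B : Set A) ∧
      ∃ r ∈ B, IsPos r ∧ ‖r‖ ≤ 1 ∧
        (∀ x ∈ F, ApproxIn (r * x) (B : Set A) ε ∧ ApproxIn (x * r) (B : Set A) ε) ∧
        (∀ x ∈ F, ‖r * x - x * r‖ < ε) ∧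
        CuntzBelow (CutPos (b * b - b * r * b) ε) a ∧
        1 - ε ≤ ‖r * a * r‖

/-- Membership in the class `TAΩ` (Elliott–Niu tracial approximation), where the
class `Ω` is modelled as a set of (C*-)subalgebras of `A`. -/
def MemTA (Ω : Set (NonUnitalStarSubalgebra ℂ A)) : Prop :=
  ∀ ε : ℝ, 0 < ε → ∀ F : Finset A, ∀ a : A, IsPos a → a ≠ 0 →
    ∃ B ∈ Ω, IsClosed (B : Set A) ∧
      ∃ p ∈ B, IsSelfAdjoint p ∧ p * p = p ∧ (∀ b ∈ B, p * b = b ∧ b * p = b) ∧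
        (∀ x ∈ F, ‖p * x - x * p‖ < ε) ∧
        (∀ x ∈ F, ApproxIn (p * x * p) (B : Set A) ε) ∧
        CuntzBelow (1 - p) a

/-!
Given `a ≥ 0` with `‖a‖ = 1`, let `f` be a function of `a` supported near the top of its spectrum,
so that `a f ≈ f`. If `p` almost commutes with `a` and `‖p a p‖` is not close to `1`, then
`p f ≈ 0`, that is, `f` lives almost under `1 - p`. The hereditary subalgebra of `f` contains
`s ≠ 0` and `d ≠ 0` with `s d = 0`, since otherwise a nonzero corner of `A`, and by simplicity `A`
itself, would be finite-dimensional. Apply `TAΩ` with `s s*`, which is Cuntz below `a`, in place of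
`a`: the relation `1 - p ⪯ s s*` moves `1 - p` into the part of the hereditary subalgebra that is
orthogonal to `d`, leaving room for `d` under `1 - p`, which finiteness forbids. So `‖p a p‖` is
close to `1`, and `r = p` works in `GTAΩ`.
-/

section SimpleRing

open LinearMap

variable {K R : Type*} [CommRing K] [Ring R] [Algebra K R]

theorem hasNoetherianRange_mulLeftRight_of_mem_span_left {x x' y : R}
    (hxy : (mulLeftRight K (x, y)).HasNoetherianRange) (hx' : x' ∈ TwoSidedIdeal.span {x}) :
    (mulLeftRight K (x', y)).HasNoetherianRange := by
  induction hx' using TwoSidedIdeal.span_induction with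
  | mem x' hx' => rwa [show x' = x from hx']
  | zero => exact (show mulLeftRight K (0, y) = 0 by ext; simp) ▸ .zero
  | add x₁ x₂ _ _ h₁ h₂ =>
    exact (show mulLeftRight K (x₁ + x₂, y) = mulLeftRight K (x₁, y) + mulLeftRight K (x₂, y)
      by ext; simp [add_mul]) ▸ h₁.add h₂
  | neg x₁ _ h₁ =>
    exact (show mulLeftRight K (-x₁, y) = -mulLeftRight K (x₁, y) by ext; simp) ▸ h₁.neg
  | left_absorb b x₁ _ h₁ =>
    exact (show mulLeftRight K (b * x₁, y) = mulLeft K b ∘ₗ mulLeftRight K (x₁, y)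
      by ext; simp [mul_assoc]) ▸ h₁.comp_left _
  | right_absorb b x₁ _ h₁ =>
    exact (show mulLeftRight K (x₁ * b, y) = mulLeftRight K (x₁, y) ∘ₗ mulLeft K b
      by ext; simp [mul_assoc]) ▸ h₁.comp_right _

theorem hasNoetherianRange_mulLeftRight_of_mem_span_right {x y y' : R}
    (hxy : (mulLeftRight K (x, y)).HasNoetherianRange) (hy' : y' ∈ TwoSidedIdeal.span {y}) :
    (mulLeftRight K (x, y')).HasNoetherianRange := by
  induction hy' using TwoSidedIdeal.span_induction with
  | mem y' hy' => rwa [show y' = y from hy']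
  | zero => exact (show mulLeftRight K (x, 0) = 0 by ext; simp) ▸ .zero
  | add y₁ y₂ _ _ h₁ h₂ =>
    exact (show mulLeftRight K (x, y₁ + y₂) = mulLeftRight K (x, y₁) + mulLeftRight K (x, y₂)
      by ext; simp [mul_add]) ▸ h₁.add h₂
  | neg y₁ _ h₁ =>
    exact (show mulLeftRight K (x, -y₁) = -mulLeftRight K (x, y₁) by ext; simp) ▸ h₁.neg
  | left_absorb b y₁ _ h₁ =>
    exact (show mulLeftRight K (x, b * y₁) = mulLeftRight K (x, y₁) ∘ₗ mulRight K b
      by ext; simp [mul_assoc]) ▸ h₁.comp_right _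
  | right_absorb b y₁ _ h₁ =>
    exact (show mulLeftRight K (x, y₁ * b) = mulRight K b ∘ₗ mulLeftRight K (x, y₁)
      by ext; simp [mul_assoc]) ▸ h₁.comp_left _

theorem isNoetherian_of_hasNoetherianRange_mulLeftRight [IsSimpleRing R] {x y : R} (hx : x ≠ 0)
    (hy : y ≠ 0) (hxy : (mulLeftRight K (x, y)).HasNoetherianRange) : IsNoetherian K R := by
  have hone : ∀ {z : R}, z ≠ 0 → 1 ∈ TwoSidedIdeal.span {z} := fun hz =>
    IsSimpleRing.one_mem_of_ne_zero_mem _ hz (TwoSidedIdeal.subset_span rfl)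
  have hid : (mulLeftRight K ((1 : R), (1 : R))).HasNoetherianRange :=
    hasNoetherianRange_mulLeftRight_of_mem_span_right
      (hasNoetherianRange_mulLeftRight_of_mem_span_left hxy (hone hx)) (hone hy)
  have hrange : (mulLeftRight K ((1 : R), (1 : R))).range = ⊤ :=
    range_eq_top.2 fun a => ⟨a, by simp⟩
  rwa [HasNoetherianRange, hrange, isNoetherian_top_iff] at hid

theorem IsSimpleCStarAlgebra.isSimpleRing {R : Type*} [NormedRing R] [HasSummableGeomSeries R]
    (hR : IsSimpleCStarAlgebra R) : IsSimpleRing R := by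
  have := hR.1
  refine .of_eq_bot_or_eq_top fun I => ?_
  have : I.asIdeal.closure.IsTwoSided :=
    ⟨fun {x} y hx => map_mem_closure (f := (· * y)) (continuous_mul_const y) hx
      fun z hz => I.mul_mem_right z y hz⟩
  have hclosed : IsClosed (I.asIdeal.closure.toTwoSided : Set R) := by
    rw [Ideal.coe_toTwoSided]
    exact isClosed_closure
  rcases hR.2 _ hclosed with h | h <;> rw [Ideal.coe_toTwoSided] at h
  · left
    refine eq_bot_iff.2 fun x hx => ?_
    have : x ∈ (I.asIdeal.closure : Set R) := subset_closure hx
    rwa [h] at this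
  · right
    have hI : I.asIdeal = ⊤ := by_contra fun hne =>
      I.asIdeal.closure_ne_top hne (SetLike.coe_injective h)
    exact I.one_mem_iff.1 (I.asIdeal.eq_top_iff_one.1 hI)

end SimpleRing

section FunctionalCalculus

theorem exists_mul_self_eq_smul_of_spectrum_subsingleton {h : A} (hh : IsSelfAdjoint h)
    (hspec : (spectrum ℝ h \ {0}).Subsingleton) : ∃ μ : ℝ, h * h = μ • h := by
  obtain ⟨μ, hμ⟩ : ∃ μ : ℝ, spectrum ℝ h \ {0} ⊆ {μ} :=
    hspec.eq_empty_or_singleton.elim (fun h0 => ⟨0, by simp [h0]⟩) fun ⟨μ, h1⟩ => ⟨μ, h1.subset⟩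
  refine ⟨μ, ?_⟩
  calc h * h = cfc (fun t : ℝ => t * t) h := by
        rw [cfc_mul (fun t => t) (fun t => t) h, cfc_id' ℝ h]
    _ = cfc (fun t : ℝ => μ * t) h := cfc_congr fun t ht => by
        by_cases ht0 : t = 0
        · simp [ht0]
        · simp [show t = μ from hμ ⟨ht, ht0⟩]
    _ = μ • h := by rw [cfc_const_mul μ (fun t => t) h, cfc_id' ℝ h]

theorem exists_mul_mul_mul_eq_zero_of_mem_spectrum {h : A} (hh : IsSelfAdjoint h) {l m : ℝ}
    (hl : l ∈ spectrum ℝ h) (hm : m ∈ spectrum ℝ h) (hl0 : l ≠ 0) (hm0 : m ≠ 0) (hlm : l < m) :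
    ∃ x y : A, x * h ≠ 0 ∧ h * y ≠ 0 ∧ x * h * (h * y) = 0 := by
  obtain ⟨c, hlc, hcm⟩ := exists_between hlm
  let φ : ℝ → ℝ := fun t => min (t - c) 0
  let ψ : ℝ → ℝ := fun t => max (t - c) 0
  have hφ : cfc φ h * h = cfc (fun t => φ t * t) h := by
    rw [cfc_mul φ (fun t => t) h (by fun_prop) (by fun_prop), cfc_id' ℝ h]
  have hψ : h * cfc ψ h = cfc (fun t => t * ψ t) h := by
    rw [cfc_mul (fun t => t) ψ h (by fun_prop) (by fun_prop), cfc_id' ℝ h]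
  refine ⟨cfc φ h, cfc ψ h, fun h0 => ?_, fun h0 => ?_, ?_⟩
  · have := norm_apply_le_norm_cfc (fun t => φ t * t) h hl (by fun_prop) hh
    rw [← hφ, h0, norm_zero, norm_le_zero_iff] at this
    simp [φ, hl0, hlc.not_ge] at this
  · have := norm_apply_le_norm_cfc (fun t => t * ψ t) h hm (by fun_prop) hh
    rw [← hψ, h0, norm_zero, norm_le_zero_iff] at this
    simp [ψ, hm0, hcm.not_ge] at this
  · rw [hφ, hψ, ← cfc_mul _ _ h (by fun_prop) (by fun_prop), ← cfc_zero ℝ h]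
    refine cfc_congr fun t _ => ?_
    rcases le_total t c with htc | htc <;> simp [φ, ψ, htc]

theorem exists_cfc_eq_conj {x : A} (hx : IsSelfAdjoint x) {ψ : ℝ → ℝ} (hψ : Continuous ψ)
    (hψ0 : ∀ t, 0 ≤ ψ t) {ε : ℝ} (hε : 0 < ε) (hψε : ∀ t ≤ ε, ψ t = 0) :
    ∃ k : A, cfc ψ x = k * x * star k := by
  have hmax : ∀ t, 0 < max t ε := fun t => hε.trans_le (le_max_right t ε)
  let κ : ℝ → ℝ := fun t => √(ψ t / max t ε)
  have hκ : Continuous κ := (hψ.div (by fun_prop) fun t => (hmax t).ne').sqrt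
  refine ⟨cfc κ x, ?_⟩
  calc cfc ψ x = cfc (fun t => κ t * t * κ t) x := cfc_congr fun t _ => by
        have hsq : κ t * κ t = ψ t / max t ε := Real.mul_self_sqrt (div_nonneg (hψ0 t) (hmax t).le)
        rw [mul_right_comm, hsq]
        rcases le_total t ε with ht | ht
        · simp [hψε t ht]
        · rw [max_eq_left ht, div_mul_cancel₀ _ (hε.trans_le ht).ne']
    _ = cfc κ x * x * cfc κ x := by
        rw [cfc_mul (fun t => κ t * t) κ x (by fun_prop) (by fun_prop),
          cfc_mul κ (fun t => t) x (by fun_prop) (by fun_prop), cfc_id' ℝ x]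
    _ = cfc κ x * x * star (cfc κ x) := by
        rw [(cfc_predicate κ x : IsSelfAdjoint _).star_eq]

theorem exists_local_unit_of_one_mem_spectrum [Nontrivial A] {a : A} (ha : IsSelfAdjoint a)
    (ha1 : ‖a‖ ≤ 1) (hmem : (1 : ℝ) ∈ spectrum ℝ a) {η : ℝ} (hη : 0 < η) (hη1 : η < 1) :
    ∃ f g u : A, IsSelfAdjoint f ∧ ‖f‖ ≤ 1 ∧ ‖a * f - f‖ ≤ η ∧ f = u * a * star u ∧
      IsSelfAdjoint g ∧ g ≠ 0 ∧ f * g = g := by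
  let φ : ℝ → ℝ := fun t => max 0 (min 1 ((t - (1 - η)) * (2 / η)))
  let γ : ℝ → ℝ := fun t => max 0 (t - (1 - η / 2))
  have hφ0 : ∀ t, 0 ≤ φ t := fun t => le_max_left _ _
  have hφ1 : ∀ t, φ t ≤ 1 := fun t => max_le zero_le_one (min_le_left _ _)
  have hφη : ∀ t ≤ 1 - η, φ t = 0 := fun t ht => max_eq_left <| (min_le_right _ _).trans <|
    mul_nonpos_of_nonpos_of_nonneg (by linarith) (by positivity)
  have hφγ : ∀ t, φ t * γ t = γ t := fun t => by
    rcases le_total t (1 - η / 2) with ht | ht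
    · simp [γ, max_eq_left (sub_nonpos.2 ht)]
    · have h1 : 1 ≤ (t - (1 - η)) * (2 / η) := by
        rw [← mul_div_assoc, le_div_iff₀ hη]; linarith
      simp [φ, min_eq_left h1]
  have hφ_near : ∀ t ≤ 1, ‖t * φ t - φ t‖ ≤ η := fun t ht => by
    rcases le_total t (1 - η) with h | h
    · simpa [hφη t h] using hη.le
    · have : t * φ t - φ t = -((1 - t) * φ t) := by ring
      rw [this, norm_neg, Real.norm_of_nonneg (mul_nonneg (by linarith) (hφ0 t))]
      nlinarith [hφ0 t, hφ1 t]
  obtain ⟨u, hu⟩ := exists_cfc_eq_conj ha (by fun_prop : Continuous φ) hφ0 (sub_pos.2 hη1) hφη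
  refine ⟨cfc φ a, cfc γ a, u, cfc_predicate _ a, ?_, ?_, hu, cfc_predicate _ a, fun h0 => ?_, ?_⟩
  · exact norm_cfc_le zero_le_one fun t _ => by rw [Real.norm_of_nonneg (hφ0 t)]; exact hφ1 t
  · have : a * cfc φ a - cfc φ a = cfc (fun t => t * φ t - φ t) a := by
      rw [cfc_sub (fun t => t * φ t) φ a (by fun_prop) (by fun_prop),
        cfc_mul (fun t => t) φ a (by fun_prop) (by fun_prop), cfc_id' ℝ a]
    rw [this]
    exact norm_cfc_le hη.le fun t ht => hφ_near t <|
      (Real.le_norm_self t).trans ((spectrum.norm_le_norm_of_mem ht).trans ha1)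
  · have := norm_apply_le_norm_cfc γ a hmem (by fun_prop) ha
    rw [h0, norm_zero, norm_le_zero_iff] at this
    simp only [γ, max_eq_left_iff] at this
    linarith
  · rw [← cfc_mul φ γ a (by fun_prop) (by fun_prop)]
    exact cfc_congr fun t _ => hφγ t

end FunctionalCalculus

section CornerZeroDivisors

variable {g : A} (hg : IsSelfAdjoint g)
  (hdom : ∀ x y : A, x * g * (g * y) = 0 → x * g = 0 ∨ g * y = 0)

include hdom in
theorem mul_left_cancel_of_forall_mul_eq_zero {x y z : A} (hx : x * g ≠ 0)
    (h : x * g * (g * y) = x * g * (g * z)) : g * y = g * z := by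
  have : x * g * (g * (y - z)) = 0 := by rw [mul_sub, mul_sub, h, sub_self]
  rw [← sub_eq_zero, ← mul_sub]
  exact (hdom x (y - z) this).resolve_left hx

include hg hdom

theorem exists_conj_mul_self_eq_smul {x : A} (hx : IsSelfAdjoint x) :
    ∃ μ : ℝ, g * x * g * (g * x * g) = μ • (g * x * g) := by
  have hgxg : IsSelfAdjoint (g * x * g) := hx.conjugate_self hg
  have hnlt : ∀ l ∈ spectrum ℝ (g * x * g) \ {0}, ∀ m ∈ spectrum ℝ (g * x * g) \ {0}, ¬ l < m :=
    fun l hl m hm hlm => by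
    obtain ⟨k₁, k₂, h₁, h₂, h₁₂⟩ :=
      exists_mul_mul_mul_eq_zero_of_mem_spectrum hgxg hl.1 hm.1 hl.2 hm.2 hlm
    rcases hdom (k₁ * g * x) (x * g * k₂) (by simpa only [mul_assoc] using h₁₂) with h | h
    · exact h₁ (by simpa only [mul_assoc] using h)
    · exact h₂ (by simpa only [mul_assoc] using h)
  exact exists_mul_self_eq_smul_of_spectrum_subsingleton hgxg fun l hl m hm =>
    le_antisymm (not_lt.1 (hnlt m hm l hl)) (not_lt.1 (hnlt l hl m hm))

-- With `h = g x g` and `k = g * g`, cancellation turns `k * k = l • k` into `k * h = l • h`, whose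
-- adjoint is `h * k = l • h`; comparing with `h * h = μ • h` and cancelling `h` gives the claim.
theorem exists_conj_eq_smul_mul_self (hg0 : g ≠ 0) {x : A} (hx : IsSelfAdjoint x) :
    ∃ c : ℝ, g * x * g = c • (g * g) := by
  have hgxg : IsSelfAdjoint (g * x * g) := hx.conjugate_self hg
  have hgg : IsSelfAdjoint (g * g) := by
    simpa only [mul_one] using (IsSelfAdjoint.one A).conjugate_self hg
  have hgg0 : g * g ≠ 0 := by
    simpa only [hg.star_eq] using (CStarRing.star_mul_self_ne_zero_iff g).2 hg0
  obtain ⟨l, hl⟩ := exists_conj_mul_self_eq_smul hg hdom (.one A)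
  obtain ⟨μ, hμ⟩ := exists_conj_mul_self_eq_smul hg hdom hx
  rw [mul_one] at hl
  have hl0 : l ≠ 0 := by
    rintro rfl
    refine (CStarRing.star_mul_self_ne_zero_iff (g * g)).2 hgg0 ?_
    rw [hgg.star_eq, hl, zero_smul]
  have hleft : g * g * (g * x * g) = l • (g * x * g) := by
    have : g * g * (g * (g * g * x * g)) = g * g * (g * (l • (x * g))) := calc
      g * g * (g * (g * g * x * g)) = g * g * (g * g) * (g * x * g) := by simp only [mul_assoc]
      _ = g * g * (g * (l • (x * g))) := by
        rw [hl]; simp only [mul_assoc, mul_smul_comm, smul_mul_assoc]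
    simpa only [mul_assoc, mul_smul_comm] using
      mul_left_cancel_of_forall_mul_eq_zero hdom hgg0 this
  have hright : g * x * g * (g * g) = l • (g * x * g) := by
    simpa only [star_mul, star_smul, hg.star_eq, hgxg.star_eq, star_trivial] using
      congrArg star hleft
  by_cases h0 : g * x * g = 0
  · exact ⟨0, by rw [h0, zero_smul]⟩
  have : g * x * g * (g * (x * g)) = g * x * g * (g * ((μ * l⁻¹) • g)) := calc
    g * x * g * (g * (x * g)) = μ • (g * x * g) := by rw [← hμ]; simp only [mul_assoc]
    _ = g * x * g * (g * ((μ * l⁻¹) • g)) := by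
      rw [mul_smul_comm, mul_smul_comm, hright, smul_smul, inv_mul_cancel_right₀ hl0]
  refine ⟨μ * l⁻¹, ?_⟩
  simpa only [mul_assoc, mul_smul_comm] using mul_left_cancel_of_forall_mul_eq_zero hdom h0 this

theorem finiteDimensional_of_forall_mul_eq_zero (hA : IsSimpleCStarAlgebra A) (hg0 : g ≠ 0) :
    FiniteDimensional ℂ A := by
  have := hA.isSimpleRing
  have hrange : (LinearMap.mulLeftRight ℂ (g, g)).range ≤ Submodule.span ℂ {g * g} := by
    rintro _ ⟨x, rfl⟩
    obtain ⟨c, hc⟩ := exists_conj_eq_smul_mul_self hg hdom hg0 (realPart x).2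
    obtain ⟨d, hd⟩ := exists_conj_eq_smul_mul_self hg hdom hg0 (imaginaryPart x).2
    refine Submodule.mem_span_singleton.2 ⟨c + Complex.I * d, ?_⟩
    calc ((c : ℂ) + Complex.I * d) • (g * g)
        = g * realPart x * g + Complex.I • (g * imaginaryPart x * g) := by
          rw [hc, hd, add_smul, mul_smul, Complex.coe_smul, Complex.coe_smul]
      _ = g * (realPart x + Complex.I • (imaginaryPart x : A)) * g := by
          simp only [mul_add, add_mul, mul_smul_comm, smul_mul_assoc]
      _ = LinearMap.mulLeftRight ℂ (g, g) x := by
          rw [realPart_add_I_smul_imaginaryPart, LinearMap.mulLeftRight_apply]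
  have : IsNoetherian ℂ A := isNoetherian_of_hasNoetherianRange_mulLeftRight (K := ℂ) hg0 hg0 <|
    isNoetherian_of_le hrange
  infer_instance

end CornerZeroDivisors

theorem exists_mul_mul_mul_eq_zero (hinf : ¬ FiniteDimensional ℂ A) (hA : IsSimpleCStarAlgebra A)
    {g : A} (hg : IsSelfAdjoint g) (hg0 : g ≠ 0) :
    ∃ x y : A, x * g ≠ 0 ∧ g * y ≠ 0 ∧ x * g * (g * y) = 0 := by
  by_contra! hdom
  exact hinf <| finiteDimensional_of_forall_mul_eq_zero hg
    (fun x y h => or_iff_not_imp_left.2 fun hx => by_contra fun hy => hdom x y hx hy h) hA hg0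

section CuntzSubequivalence

theorem IsPos.isSelfAdjoint {R : Type*} [Semigroup R] [StarMul R] {a : R} (ha : IsPos a) :
    IsSelfAdjoint a := by
  obtain ⟨x, rfl⟩ := ha
  exact .star_mul_self x

theorem IsPos.conj {R : Type*} [Semigroup R] [StarMul R] {a : R} (ha : IsPos a) (y : R) :
    IsPos (y * a * star y) := by
  obtain ⟨x, rfl⟩ := ha
  exact ⟨x * star y, by simp only [star_mul, star_star, mul_assoc]⟩

theorem IsPos.norm_mem_spectrum [Nontrivial A] {a : A} (ha : IsPos a) : ‖a‖ ∈ spectrum ℝ a := by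
  let _ := CStarAlgebra.spectralOrder A
  let _ := CStarAlgebra.spectralOrderedRing A
  obtain ⟨x, rfl⟩ := ha
  exact CStarAlgebra.norm_mem_spectrum_of_nonneg (star_mul_self_nonneg x)

theorem CuntzBelow.conj {R : Type*} [NonUnitalNormedRing R] [StarRing R] {x a : R}
    (h : CuntzBelow x a) (y : R) : CuntzBelow (y * x * star y) a := by
  obtain ⟨v, hv⟩ := h
  refine ⟨fun n => y * v n, ?_⟩
  have hlim : Tendsto (fun n => ‖y‖ * ‖v n * a * star (v n) - x‖ * ‖star y‖) atTop (𝓝 0) := by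
    simpa only [mul_zero, zero_mul] using (hv.const_mul ‖y‖).mul_const ‖star y‖
  refine squeeze_zero (fun _ => norm_nonneg _) (fun n => ?_) hlim
  calc ‖y * v n * a * star (y * v n) - y * x * star y‖
      = ‖y * (v n * a * star (v n) - x) * star y‖ := by
        simp only [star_mul, mul_sub, sub_mul, mul_assoc]
    _ ≤ ‖y‖ * ‖v n * a * star (v n) - x‖ * ‖star y‖ := norm_mul₃_le

theorem CuntzBelow.of_conj {R : Type*} [NonUnitalNormedRing R] [StarRing R] {x a y : R}
    (h : CuntzBelow x (y * a * star y)) : CuntzBelow x a := by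
  obtain ⟨v, hv⟩ := h
  exact ⟨fun n => v n * y, by simpa only [star_mul, mul_assoc] using hv⟩

theorem CuntzBelow.cutPos {x a : A} (h : CuntzBelow x a) (hx : IsSelfAdjoint x) {ε : ℝ}
    (hε : 0 < ε) : CuntzBelow (CutPos x ε) a := by
  obtain ⟨k, hk⟩ : ∃ k : A, CutPos x ε = k * x * star k :=
    exists_cfc_eq_conj hx (by fun_prop) (fun t => le_max_right _ _) hε fun t ht =>
      max_eq_right (sub_nonpos.2 ht)
  exact hk ▸ h.conj k

theorem ApproxIn.of_norm_sub_add_le {E : Type*} [NormedAddGroup E] {x y : E} {S : Set E} {δ ε : ℝ}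
    (hx : ApproxIn x S δ) (hyx : ‖y - x‖ + δ ≤ ε) : ApproxIn y S ε := by
  obtain ⟨s, hs, hxs⟩ := hx
  refine ⟨s, hs, ?_⟩
  linarith [norm_sub_le_norm_sub_add_norm_sub y x s]

end CuntzSubequivalence

section Compression

variable {R : Type*} [NormedRing R] [StarRing R] [CStarRing R] {p : R}
  (hp : IsStarProjection p)
include hp

theorem norm_left_mul_sub_compression_le (x : R) : ‖p * x - p * x * p‖ ≤ ‖p * x - x * p‖ := calc
  ‖p * x - p * x * p‖ = ‖p * (p * x - x * p)‖ := by
    rw [mul_sub, ← mul_assoc, ← mul_assoc, hp.isIdempotentElem.eq]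
  _ ≤ ‖p * x - x * p‖ := (norm_mul_le _ _).trans <|
    mul_le_of_le_one_left (norm_nonneg _) (hp.norm_le p)

theorem norm_right_mul_sub_compression_le (x : R) : ‖x * p - p * x * p‖ ≤ ‖p * x - x * p‖ := calc
  ‖x * p - p * x * p‖ = ‖(x * p - p * x) * p‖ := by
    rw [sub_mul, mul_assoc x, hp.isIdempotentElem.eq]
  _ ≤ ‖x * p - p * x‖ := (norm_mul_le _ _).trans <|
    mul_le_of_le_one_right (norm_nonneg _) (hp.norm_le p)
  _ = ‖p * x - x * p‖ := norm_sub_rev _ _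

theorem one_sub_norm_compression_mul_norm_le (a : R) {f : R} (hf : ‖f‖ ≤ 1) :
    (1 - ‖p * a * p‖) * ‖p * f‖ ≤ ‖p * a - a * p‖ + ‖a * f - f‖ := by
  have hsplit : p * f = p * a * p * (p * f) + ((p * a - p * a * p) * f - p * (a * f - f)) := by
    have : p * a * p * (p * f) = p * a * p * f := by
      rw [← mul_assoc, mul_assoc (p * a), hp.isIdempotentElem.eq]
    rw [this]
    noncomm_ring
  have hcompr : ‖p * a * p * (p * f)‖ ≤ ‖p * a * p‖ * ‖p * f‖ := norm_mul_le _ _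
  have hcomm : ‖(p * a - p * a * p) * f‖ ≤ ‖p * a - a * p‖ := (norm_mul_le _ _).trans <|
    (mul_le_of_le_one_right (norm_nonneg _) hf).trans (norm_left_mul_sub_compression_le hp a)
  have hunit : ‖p * (a * f - f)‖ ≤ ‖a * f - f‖ := (norm_mul_le _ _).trans <|
    mul_le_of_le_one_left (norm_nonneg _) (hp.norm_le p)
  have hnorm : ‖p * f‖ ≤ ‖p * a * p * (p * f)‖
      + (‖(p * a - p * a * p) * f‖ + ‖p * (a * f - f)‖) :=
    (congrArg norm hsplit).trans_le <| (norm_add_le _ _).trans <| by gcongr; exact norm_sub_le _ _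
  linarith

end Compression

section FiniteAlgebra

variable (hfin : ∀ v : A, star v * v = 1 → v * star v = 1)
include hfin

theorem isUnit_of_isUnit_star_mul_self {x : A} (hx : IsUnit (star x * x)) : IsUnit x := by
  let _ := CStarAlgebra.spectralOrder A
  let _ := CStarAlgebra.spectralOrderedRing A
  obtain ⟨t, ht⟩ := (CFC.isUnit_sqrt_iff (star x * x)).2 hx
  have htt : (t * t : A) = star x * x := by
    rw [ht, CFC.sqrt_mul_sqrt_self _ (star_mul_self_nonneg x)]
  have hstar : star t = t := Units.ext <| by
    rw [Units.coe_star, ht, (CFC.sqrt_nonneg _).isSelfAdjoint.star_eq]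
  have hiso : star (x * ↑t⁻¹) * (x * ↑t⁻¹) = 1 := calc
    star (x * ↑t⁻¹) * (x * ↑t⁻¹) = ↑t⁻¹ * (star x * x) * ↑t⁻¹ := by
      rw [star_mul, ← Units.coe_star, star_inv, hstar]
      simp only [mul_assoc]
    _ = 1 := by rw [← htt, Units.inv_mul_cancel_left, Units.mul_inv]
  have hunit : IsUnit (x * ↑t⁻¹) := ⟨⟨_, _, hfin _ hiso, hiso⟩, rfl⟩
  exact (Units.isUnit_mul_units x t⁻¹).1 hunit

-- `p * (1 - f) + z` is right invertible, hence invertible as the algebra is finite, but kills `d`.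
theorem eq_zero_of_norm_mul_star_self_sub_lt {p f z d : A} (hp : IsStarProjection p)
    (hf : IsSelfAdjoint f) (hzf : z * f = z) (hfd : f * d = d) (hzd : z * d = 0)
    (hlt : ‖p * f‖ * (2 + ‖p * f‖) + ‖1 - p - z * star z‖ < 1) : d = 0 := by
  have hkill : (p * (1 - f) + z) * d = 0 := by
    rw [add_mul, hzd, mul_assoc, sub_mul, one_mul, hfd, sub_self, mul_zero, zero_add]
  have hfz : f * star z = star z := by
    simpa only [star_mul, hf.star_eq] using congrArg star hzf
  have hprod : (p * (1 - f) + z) * star (p * (1 - f) + z)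
      = 1 - (p * f * (2 * p - f * p) + (1 - p - z * star z)) := calc
    (p * (1 - f) + z) * star (p * (1 - f) + z) = (p * (1 - f) + z) * ((1 - f) * p + star z) := by
      rw [star_add, star_mul, star_sub, star_one, hf.star_eq, hp.isSelfAdjoint.star_eq]
    _ = p * p - p * f * (2 * p - f * p) + p * (star z - f * star z) + (z - z * f) * p
        + z * star z := by noncomm_ring
    _ = 1 - (p * f * (2 * p - f * p) + (1 - p - z * star z)) := by
      rw [hp.isIdempotentElem.eq, hfz, hzf]
      noncomm_ring
  have hfp : ‖2 * p - f * p‖ ≤ 2 + ‖p * f‖ := by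
    have : ‖f * p‖ = ‖p * f‖ := by
      rw [← norm_star, star_mul, hf.star_eq, hp.isSelfAdjoint.star_eq]
    rw [two_mul]
    linarith [norm_sub_le (p + p) (f * p), norm_add_le p p, hp.norm_le p]
  have hunit : IsUnit ((p * (1 - f) + z) * star (p * (1 - f) + z)) := by
    rw [hprod]
    refine isUnit_one_sub_of_norm_lt_one (lt_of_le_of_lt ?_ hlt)
    calc ‖p * f * (2 * p - f * p) + (1 - p - z * star z)‖
        ≤ ‖p * f‖ * ‖2 * p - f * p‖ + ‖1 - p - z * star z‖ :=
          (norm_add_le _ _).trans (by gcongr; exact norm_mul_le _ _)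
      _ ≤ ‖p * f‖ * (2 + ‖p * f‖) + ‖1 - p - z * star z‖ := by gcongr
  have hstar : IsUnit (star (p * (1 - f) + z)) :=
    isUnit_of_isUnit_star_mul_self hfin (by rwa [star_star])
  exact (isUnit_star.1 hstar).mul_right_eq_zero.1 hkill

end FiniteAlgebra

section TestElement

variable (hfin : ∀ v : A, star v * v = 1 → v * star v = 1)
include hfin

theorem one_sub_le_norm_compression {a p f s d : A} {ε : ℝ} (hε : 0 < ε) (hp : IsStarProjection p)
    (hcomm : ‖p * a - a * p‖ ≤ ε / 20) (hf : IsSelfAdjoint f) (hf1 : ‖f‖ ≤ 1)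
    (haf : ‖a * f - f‖ ≤ ε / 20) (hsf : s * f = s) (hfd : f * d = d) (hd : d ≠ 0)
    (hsd : s * d = 0) (hcuntz : CuntzBelow (1 - p) (s * star s)) : 1 - ε ≤ ‖p * a * p‖ := by
  by_contra! hlt
  have hpf : ‖p * f‖ ≤ 1 / 10 := by
    have hle : (1 - ‖p * a * p‖) * ‖p * f‖ ≤ ‖p * a - a * p‖ + ‖a * f - f‖ :=
      one_sub_norm_compression_mul_norm_le hp a hf1
    have : ε * ‖p * f‖ ≤ ε * (1 / 10) := by nlinarith [norm_nonneg (p * f)]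
    exact le_of_mul_le_mul_left this hε
  obtain ⟨v, hv⟩ := hcuntz
  obtain ⟨n, hn⟩ := (hv.eventually (gt_mem_nhds one_half_pos)).exists
  have hz : ‖1 - p - v n * s * star (v n * s)‖ < 1 / 2 := by
    rw [norm_sub_rev]
    simpa only [star_mul, mul_assoc] using hn
  have hzf : v n * s * f = v n * s := by rw [mul_assoc, hsf]
  have hzd : v n * s * d = 0 := by rw [mul_assoc, hsd, mul_zero]
  exact hd <| eq_zero_of_norm_mul_star_self_sub_lt hfin hp hf hzf hfd hzd <| by
    nlinarith [norm_nonneg (p * f)]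

theorem exists_conj_forall_one_sub_le_norm_compression (hinf : ¬ FiniteDimensional ℂ A)
    (hA : IsSimpleCStarAlgebra A) {a : A} (ha : IsPos a) (ha1 : ‖a‖ = 1) {ε : ℝ} (hε : 0 < ε) :
    ∃ y : A, y * a * star y ≠ 0 ∧ ∃ δ > 0, ∀ p : A, IsStarProjection p →
      ‖p * a - a * p‖ < δ → CuntzBelow (1 - p) (y * a * star y) → 1 - ε ≤ ‖p * a * p‖ := by
  have := hA.1
  obtain ⟨f, g, u, hf, hf1, haf, hfu, hg, hg0, hfg⟩ := exists_local_unit_of_one_mem_spectrum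
    ha.isSelfAdjoint ha1.le (ha1 ▸ ha.norm_mem_spectrum)
    (lt_min (by positivity : 0 < ε / 20) one_half_pos) (min_lt_of_right_lt one_half_lt_one)
  obtain ⟨x, d, hx, hd, hxd⟩ := exists_mul_mul_mul_eq_zero hinf hA hg hg0
  have hsf : x * g * f = x * g := by
    have : g * f = g := by simpa only [star_mul, hf.star_eq, hg.star_eq] using congrArg star hfg
    rw [mul_assoc, this]
  have hfd : f * (g * d) = g * d := by rw [← mul_assoc, hfg]
  have hy : x * g * u * a * star (x * g * u) = x * g * star (x * g) := calc
    x * g * u * a * star (x * g * u) = x * g * (u * a * star u) * star (x * g) := by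
      simp only [star_mul, mul_assoc]
    _ = x * g * star (x * g) := by rw [← hfu, hsf]
  refine ⟨x * g * u, ?_, ε / 20, by positivity, fun p hp hcomm hcuntz => ?_⟩
  · exact hy ▸ (CStarRing.mul_star_self_ne_zero_iff _).2 hx
  · exact one_sub_le_norm_compression hfin hε hp hcomm.le hf hf1 (haf.trans (min_le_left _ _)) hsf
      hfd hd hxd (hy ▸ hcuntz)

end TestElement

/-- If `A` is a finite, infinite-dimensional, simple, unital
C*-algebra, `Ω` is a class of unital C*-algebras, and `A ∈ TAΩ`
(Elliott–Niu tracial approximation), then `A ∈ GTAΩ`. -/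
theorem memGTA_of_memTA
    (hfin : ∀ v : A, star v * v = 1 → v * star v = 1)
    (hinf : ¬ FiniteDimensional ℂ A)
    (hA : IsSimpleCStarAlgebra A)
    (Ω : Set (NonUnitalStarSubalgebra ℂ A))
    (hΩ : ∀ B ∈ Ω, ∃ e ∈ B, ∀ b ∈ B, e * b = b ∧ b * e = b)
    (h : MemTA Ω) : MemGTA Ω := by
  classical
  intro ε hε F a b ha ha1 hb _
  obtain ⟨y, hy, δ, hδ, hnorm⟩ :=
    exists_conj_forall_one_sub_le_norm_compression hfin hinf hA ha ha1 hε
  obtain ⟨B, hB, hBc, p, hpB, hps, hpp, -, hcomm, happrox, hcuntz⟩ :=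
    h (min δ (ε / 2)) (by positivity) (insert a F) _ (ha.conj y) hy
  have hp : IsStarProjection p := ⟨hpp, hps⟩
  have hcommF : ∀ x ∈ F, ‖p * x - x * p‖ < ε / 2 := fun x hx =>
    (hcomm x (Finset.mem_insert_of_mem hx)).trans_le (min_le_right _ _)
  have happroxF : ∀ x ∈ F, ApproxIn (p * x * p) B (min δ (ε / 2)) := fun x hx =>
    happrox x (Finset.mem_insert_of_mem hx)
  have hbpb : b * b - b * p * b = b * (1 - p) * star b := by
    rw [hb.isSelfAdjoint.star_eq, mul_sub, mul_one, sub_mul]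
  refine ⟨B, hB, hBc, p, hpB, ⟨p, by rw [hps.star_eq, hpp]⟩, hp.norm_le p,
    fun x hx => ⟨(happroxF x hx).of_norm_sub_add_le ?_, (happroxF x hx).of_norm_sub_add_le ?_⟩,
    fun x hx => (hcommF x hx).trans (half_lt_self hε), ?_, ?_⟩
  · linarith [norm_left_mul_sub_compression_le hp x, hcommF x hx, min_le_right δ (ε / 2)]
  · linarith [norm_right_mul_sub_compression_le hp x, hcommF x hx, min_le_right δ (ε / 2)]
  · rw [hbpb]
    exact (hcuntz.of_conj.conj b).cutPos (hp.one_sub.isSelfAdjoint.conjugate b) hε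
  · exact hnorm p hp ((hcomm a (Finset.mem_insert_self a F)).trans_le (min_le_left _ _)) hcuntz
end

section
/- Let Ω be a class of C*-algebras and let A be a simple unital C*-algebra belonging to the class GTAΩ. Then for every ε > 0, every m ∈ ℤ_{>0}, all elements x_1, …, x_m ∈ A, and every positive element a ∈ A_+ with ‖a‖ = 1, there exist elements y_1, …, y_m ∈ A, a C*-subalgebra B ⊆ A with B ∈ Ω, and an element r ∈ B_+ with ‖r‖ ≤ 1, such that: (1) ‖y_j − x_j‖ < ε for all j = 1, …, m; (2) r·y_j ∈ B and y_j·r ∈ B (exact membership, not approximate) for all j = 1, …, m; (3) ‖r·x_j − x_j·r‖ < ε for all j = 1, …, m; (4) 1_A − r ⪯_A a; (5) ‖rar‖ ≥ 1 − ε. -/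
open Filter Topology

variable {A : Type*} [CStarAlgebra A]

/-!
Apply the definition of `GTAΩ` with `b = 1` and a tolerance `δ` much smaller than an auxiliary
parameter `η`, obtaining `s ∈ B`, and replace `s` by `r = f(s)`, where `f` is piecewise linear,
close to the identity, `0` on `[0, η]` and `1` on `[1 - δ, 1]`. Since `f = 1` on `[1 - δ, 1]`,
`1 - r` is a conjugate of `(1 - s - δ)₊` by an element of the functional calculus of `s`, so
`1 - r ≾ a`. Since `f` vanishes near `0`, there is `q ∈ B` with `r = r q s = s q r` and
`‖q‖ ≤ 1 / η`. If `b, b' ∈ B` are within `δ` of `s x` and `x s`, then subtracting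
`q (s x - b) (1 - s q)` and `(x s - b') q` from `x` moves it by less than `2 δ / η` and brings its
products with `r` into `B`.
-/

section NormedRing

theorem CuntzBelow.conjugate {R : Type*} [NonUnitalNormedRing R] [StarRing R] {c a : R}
    (h : CuntzBelow c a) (w : R) : CuntzBelow (w * c * star w) a := by
  obtain ⟨v, hv⟩ := h
  have hlim := ((tendsto_iff_norm_sub_tendsto_zero.2 hv).const_mul w).mul_const (star w)
  refine ⟨fun n => w * v n, tendsto_iff_norm_sub_tendsto_zero.1 ?_⟩
  simpa only [star_mul, mul_assoc] using hlim

theorem norm_commutator_le_add {R : Type*} [NonUnitalSeminormedRing R] (r s x : R) :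
    ‖r * x - x * r‖ ≤ ‖s * x - x * s‖ + 2 * (‖r - s‖ * ‖x‖) := by
  have hsplit : r * x - x * r = (s * x - x * s) + ((r - s) * x - x * (r - s)) := by noncomm_ring
  rw [hsplit]
  linarith [norm_add_le (s * x - x * s) ((r - s) * x - x * (r - s)),
    norm_sub_le ((r - s) * x) (x * (r - s)), norm_mul_le (r - s) x, norm_mul_le x (r - s),
    mul_comm ‖x‖ ‖r - s‖]

theorem norm_mul_mul_self_le_add {R : Type*} [NonUnitalSeminormedRing R] {r s a : R}
    (hr : ‖r‖ ≤ 1) (hs : ‖s‖ ≤ 1) (ha : ‖a‖ ≤ 1) :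
    ‖s * a * s‖ ≤ ‖r * a * r‖ + 2 * ‖r - s‖ := by
  have hsplit : s * a * s = r * a * r - ((r - s) * (a * r) + s * a * (r - s)) := by noncomm_ring
  have hleft : ‖(r - s) * (a * r)‖ ≤ ‖r - s‖ :=
    norm_mul_le_of_le le_rfl (norm_mul_le_of_le ha hr) |>.trans_eq (by ring)
  have hright : ‖s * a * (r - s)‖ ≤ ‖r - s‖ :=
    norm_mul_le_of_le (norm_mul_le_of_le hs ha) le_rfl |>.trans_eq (by ring)
  rw [hsplit]
  linarith [norm_sub_le (r * a * r) ((r - s) * (a * r) + s * a * (r - s)),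
    norm_add_le ((r - s) * (a * r)) (s * a * (r - s))]

theorem exists_near_mul_mem {R S : Type*} [NormedRing R] [SetLike S R] [NonUnitalSubringClass S R]
    {B : S} {r s q x : R} {C γ : ℝ} (hrB : r ∈ B) (hsB : s ∈ B) (hqB : q ∈ B)
    (hrqs : r * q * s = r) (hsqr : s * q * r = r) (hC : 0 < C) (hqC : ‖q‖ ≤ C)
    (hsq : ‖1 - s * q‖ ≤ 1) (hl : ApproxIn (s * x) (B : Set R) γ)
    (hr : ApproxIn (x * s) (B : Set R) γ) :
    ∃ y, ‖y - x‖ < 2 * (C * γ) ∧ r * y ∈ B ∧ y * r ∈ B := by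
  obtain ⟨b, hb, hbγ⟩ := hl
  obtain ⟨b', hb', hbγ'⟩ := hr
  refine ⟨x - q * (s * x - b) * (1 - s * q) - (x * s - b') * q, ?_, ?_, ?_⟩
  · have hleft : ‖q * (s * x - b) * (1 - s * q)‖ < C * γ := calc
      _ ≤ C * ‖s * x - b‖ * 1 := norm_mul_le_of_le (norm_mul_le_of_le hqC le_rfl) hsq
      _ < C * γ := by rw [mul_one]; gcongr
    have hright : ‖(x * s - b') * q‖ < C * γ := calc
      _ ≤ ‖x * s - b'‖ * C := norm_mul_le_of_le le_rfl hqC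
      _ < C * γ := by rw [mul_comm]; gcongr
    have hdiff : x - q * (s * x - b) * (1 - s * q) - (x * s - b') * q - x
        = -(q * (s * x - b) * (1 - s * q)) - (x * s - b') * q := by abel
    rw [hdiff]
    linarith [norm_sub_le (-(q * (s * x - b) * (1 - s * q))) ((x * s - b') * q),
      norm_neg (q * (s * x - b) * (1 - s * q))]
  · have hry : r * (x - q * (s * x - b) * (1 - s * q) - (x * s - b') * q)
        = (r - r * q * s) * x * (1 - s * q) + (r * q * b - r * q * b * (s * q) + r * b' * q) := by
      noncomm_ring
    rw [hry, hrqs, sub_self, zero_mul, zero_mul, zero_add]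
    have hrqb : r * q * b ∈ B := mul_mem (mul_mem hrB hqB) hb
    exact add_mem (sub_mem hrqb (mul_mem hrqb (mul_mem hsB hqB))) (mul_mem (mul_mem hrB hb') hqB)
  · have hyr : (x - q * (s * x - b) * (1 - s * q) - (x * s - b') * q) * r
        = (x - q * (s * x - b)) * (r - s * q * r) + b' * q * r := by noncomm_ring
    rw [hyr, hsqr, sub_self, mul_zero, zero_add]
    exact mul_mem (mul_mem hb' hqB) hrB

end NormedRing

section RealFunctions

/-- The piecewise linear function equal to `0` on `(-∞, α]` and to `1` on `[β, ∞)`, for `α < β`. On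
`[0, 1]` it is close to the identity when `α` and `1 - β` are small, so that the functional calculus
moves a positive contraction only slightly. -/
noncomputable def ramp (α β t : ℝ) : ℝ := (max α (min t β) - α) / (β - α)

variable {α β t : ℝ}

theorem continuous_ramp : Continuous (ramp α β) := by
  unfold ramp
  fun_prop

theorem ramp_of_le (ht : t ≤ α) : ramp α β t = 0 := by
  rw [ramp, max_eq_left (min_le_of_left_le ht), sub_self, zero_div]

theorem ramp_mem_Icc (h : α < β) : ramp α β t ∈ Set.Icc 0 1 := by
  have hpos : 0 < β - α := sub_pos.2 h
  rw [ramp, Set.mem_Icc, le_div_iff₀ hpos, div_le_one hpos, zero_mul, sub_nonneg,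
    sub_le_sub_iff_right]
  exact ⟨le_max_left _ _, max_le h.le (min_le_right _ _)⟩

theorem abs_ramp_sub_self_le (hα : 0 ≤ α) (h : α < β) (hβ : β ≤ 1) (ht : t ∈ Set.Icc 0 1) :
    |ramp α β t - t| ≤ α + (1 - β) := by
  obtain ⟨ht0, ht1⟩ := ht
  have hpos : 0 < β - α := sub_pos.2 h
  rw [ramp, div_sub' hpos.ne', abs_div, abs_of_pos hpos, div_le_iff₀ hpos, abs_le]
  rcases le_total t α with htα | htα
  · rw [min_eq_left (by linarith), max_eq_left htα]
    constructor <;> nlinarith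
  rcases le_total t β with htβ | htβ
  · rw [min_eq_left htβ, max_eq_right htα]
    constructor <;> nlinarith
  · rw [min_eq_right htβ, max_eq_right h.le]
    constructor <;> nlinarith

theorem one_sub_ramp (h : α < β) :
    1 - ramp α β t = (max (β - α) (β - t))⁻¹ * max (β - t) 0 := by
  have hpos : 0 < β - α := sub_pos.2 h
  rcases le_total t α with htα | htα
  · rw [ramp_of_le htα, max_eq_right (by linarith), max_eq_left (by linarith),
      inv_mul_cancel₀ (by linarith), sub_zero]
  rw [ramp, max_eq_left (a := β - α) (by linarith)]
  rcases le_total t β with htβ | htβ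
  · rw [min_eq_left htβ, max_eq_right htα, max_eq_left (by linarith)]
    field_simp
    ring
  · rw [min_eq_right htβ, max_eq_right h.le, max_eq_right (by linarith), div_self hpos.ne',
      mul_zero, sub_self]

/-- A continuous substitute for `t⁻¹` on `[0, ∞)`: it agrees with `t⁻¹` on `[α, ∞)`, is bounded by
`α⁻¹`, and vanishes at `0`, so that applying it to an element of a closed non-unital subalgebra does
not leave the subalgebra. -/
noncomputable def regularizedInv (α t : ℝ) : ℝ := t / max α t ^ 2

theorem continuous_regularizedInv (hα : 0 < α) : Continuous (regularizedInv α) :=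
  continuous_id.div (by fun_prop) fun _ => (pow_pos (lt_max_of_lt_left hα) 2).ne'

theorem regularizedInv_zero : regularizedInv α 0 = 0 := zero_div _

theorem regularizedInv_mul_self (hα : 0 < α) (ht : α ≤ t) : regularizedInv α t * t = 1 := by
  have ht0 : t ≠ 0 := (hα.trans_le ht).ne'
  rw [regularizedInv, max_eq_right ht]
  field_simp

theorem abs_regularizedInv_le (hα : 0 < α) (ht : 0 ≤ t) : |regularizedInv α t| ≤ α⁻¹ := by
  rw [regularizedInv, abs_of_nonneg (by positivity)]
  calc t / max α t ^ 2 ≤ max α t / max α t ^ 2 := by gcongr; exact le_max_right _ _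
    _ = (max α t)⁻¹ := by rw [sq, div_self_mul_self']
    _ ≤ α⁻¹ := inv_anti₀ hα (le_max_left _ _)

theorem abs_one_sub_self_mul_regularizedInv_le (hα : 0 < α) (ht : 0 ≤ t) :
    |1 - t * regularizedInv α t| ≤ 1 := by
  have hm : 0 < max α t := lt_max_of_lt_left hα
  have hsq : t * regularizedInv α t = (t / max α t) ^ 2 := by
    rw [regularizedInv, div_pow, mul_div_assoc', sq t]
  have hle : (t / max α t) ^ 2 ≤ 1 :=
    pow_le_one₀ (by positivity) ((div_le_one hm).2 (le_max_right _ _))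
  rw [hsq, abs_of_nonneg (sub_nonneg.2 hle)]
  exact sub_le_self 1 (sq_nonneg _)

end RealFunctions

section FunctionalCalculus

theorem cfc_mem_of_map_zero {B : NonUnitalStarSubalgebra ℂ A} (hB : IsClosed (B : Set A))
    {s : A} (hs : s ∈ B) {f : ℝ → ℝ} (hf : Continuous f) (hf0 : f 0 = 0) : cfc f s ∈ B := by
  rw [← cfcₙ_eq_cfc hf.continuousOn hf0]
  exact cfcₙ_mem (𝕜' := ℂ) (hs := hB) f hs

theorem norm_cfc_sub_self_le {s : A} (hs : IsSelfAdjoint s) {f : ℝ → ℝ}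
    (hf : ContinuousOn f (spectrum ℝ s)) {κ : ℝ} (hκ : 0 ≤ κ)
    (h : ∀ t ∈ spectrum ℝ s, |f t - t| ≤ κ) : ‖cfc f s - s‖ ≤ κ := by
  nth_rewrite 2 [← cfc_id' ℝ s]
  rw [← cfc_sub _ _ s]
  exact norm_cfc_le hκ h

theorem norm_cfc_ramp_le_one {s : A} {α β : ℝ} (h : α < β) : ‖cfc (ramp α β) s‖ ≤ 1 :=
  norm_cfc_le zero_le_one fun t _ => by
    rw [Real.norm_of_nonneg (ramp_mem_Icc h).1]
    exact (ramp_mem_Icc h).2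

theorem cutPos_one_sub {s : A} (hs : IsSelfAdjoint s) (δ : ℝ) :
    CutPos (1 - s) δ = cfc (fun t : ℝ => max (1 - δ - t) 0) s := by
  have hone_sub : 1 - s = cfc (fun t : ℝ => 1 - t) s := by
    rw [cfc_sub _ _ s, cfc_const_one ℝ s, cfc_id' ℝ s]
  rw [CutPos, hone_sub, ← cfc_comp' (fun t : ℝ => max (t - δ) 0) _ s]
  simp only [sub_right_comm]

theorem CuntzBelow.cfc_mul_of_nonneg {s a : A} {w g : ℝ → ℝ}
    (hw : ContinuousOn w (spectrum ℝ s)) (hw0 : ∀ t ∈ spectrum ℝ s, 0 ≤ w t)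
    (hg : ContinuousOn g (spectrum ℝ s)) (h : CuntzBelow (cfc g s) a) :
    CuntzBelow (cfc (fun t => w t * g t) s) a := by
  have hsa : IsSelfAdjoint (cfc (fun t => √(w t)) s) := cfc_predicate _ s
  have hconj : cfc (fun t => w t * g t) s
      = cfc (fun t => √(w t)) s * cfc g s * star (cfc (fun t => √(w t)) s) := by
    rw [hsa.star_eq, ← cfc_mul _ _ s, ← cfc_mul _ _ s]
    exact cfc_congr fun t ht => by rw [mul_right_comm, Real.mul_self_sqrt (hw0 t ht)]
  rw [hconj]
  exact h.conjugate _

theorem CuntzBelow.one_sub_cfc_ramp {s a : A} {η δ : ℝ} (hs : IsSelfAdjoint s)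
    (hηδ : η < 1 - δ) (h : CuntzBelow (CutPos (1 - s) δ) a) :
    CuntzBelow (1 - cfc (ramp η (1 - δ)) s) a := by
  have hpos (t : ℝ) : 0 < max (1 - δ - η) (1 - δ - t) := lt_max_of_lt_left (sub_pos.2 hηδ)
  rw [← cfc_const_one ℝ s, ← cfc_sub _ _ s (by fun_prop) continuous_ramp.continuousOn]
  simp only [one_sub_ramp hηδ]
  rw [cutPos_one_sub hs] at h
  exact h.cfc_mul_of_nonneg (ContinuousOn.inv₀ (by fun_prop) fun t _ => (hpos t).ne')
    (fun t _ => (inv_pos.2 (hpos t)).le) (by fun_prop)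

variable [PartialOrder A] [StarOrderedRing A]

theorem isPos_iff_nonneg {a : A} : IsPos a ↔ 0 ≤ a :=
  CStarAlgebra.nonneg_iff_eq_star_mul_self.symm

theorem spectrum_subset_Icc_of_norm_le_one {s : A} (hs : 0 ≤ s) (hs1 : ‖s‖ ≤ 1) :
    spectrum ℝ s ⊆ Set.Icc 0 1 := fun t ht => by
  have hle : s ≤ algebraMap ℝ A 1 := by
    rw [map_one]
    exact (CStarAlgebra.norm_le_one_iff_of_nonneg s).1 hs1
  exact ⟨spectrum_nonneg_of_nonneg hs ht, (le_algebraMap_iff_spectrum_le).1 hle t ht⟩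

theorem norm_cfc_ramp_sub_self_le {s : A} (hs : 0 ≤ s) (hs1 : ‖s‖ ≤ 1) {α β : ℝ} (hα : 0 ≤ α)
    (h : α < β) (hβ : β ≤ 1) : ‖cfc (ramp α β) s - s‖ ≤ α + (1 - β) :=
  norm_cfc_sub_self_le hs.isSelfAdjoint continuous_ramp.continuousOn (by linarith) fun _ ht =>
    abs_ramp_sub_self_le hα h hβ (spectrum_subset_Icc_of_norm_le_one hs hs1 ht)

theorem exists_near_cfc_mul_mem {B : NonUnitalStarSubalgebra ℂ A} (hB : IsClosed (B : Set A))
    {s x : A} (hsB : s ∈ B) (hs : 0 ≤ s) {f : ℝ → ℝ} (hf : Continuous f) {α γ : ℝ} (hα : 0 < α)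
    (hfα : ∀ t ≤ α, f t = 0) (hl : ApproxIn (s * x) (B : Set A) γ)
    (hr : ApproxIn (x * s) (B : Set A) γ) :
    ∃ y, ‖y - x‖ < 2 * (α⁻¹ * γ) ∧ cfc f s * y ∈ B ∧ y * cfc f s ∈ B := by
  have hq := continuous_regularizedInv hα
  set q := cfc (regularizedInv α) s
  have hs_eq : cfc (fun t : ℝ => t) s = s := cfc_id' ℝ s
  have hspec : ∀ t ∈ spectrum ℝ s, 0 ≤ t := fun t ht => spectrum_nonneg_of_nonneg hs ht
  have hsq : s * q = cfc (fun t => t * regularizedInv α t) s := by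
    rw [cfc_mul _ _ s, hs_eq]
  have hfq (t : ℝ) : f t * (t * regularizedInv α t) = f t := by
    rcases le_total t α with htα | htα
    · rw [hfα t htα, zero_mul]
    · rw [mul_comm t, regularizedInv_mul_self hα htα, mul_one]
  have hsqr : s * q * cfc f s = cfc f s := by
    rw [hsq, ← cfc_mul _ _ s]
    exact cfc_congr fun t _ => by rw [mul_comm, hfq]
  have hrqs : cfc f s * q * s = cfc f s := by
    nth_rewrite 2 [← hs_eq]
    rw [← cfc_mul _ _ s, ← cfc_mul _ _ s]
    exact cfc_congr fun t _ => by rw [mul_assoc, mul_comm _ t, hfq]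
  refine exists_near_mul_mem (cfc_mem_of_map_zero hB hsB hf (hfα 0 hα.le)) hsB
    (cfc_mem_of_map_zero hB hsB hq regularizedInv_zero) hrqs hsqr (inv_pos.2 hα) ?_ ?_ hl hr
  · exact norm_cfc_le (inv_pos.2 hα).le fun t ht => abs_regularizedInv_le hα (hspec t ht)
  · rw [hsq, ← cfc_const_one ℝ s, ← cfc_sub _ _ s]
    exact norm_cfc_le zero_le_one fun t ht =>
      abs_one_sub_self_mul_regularizedInv_le hα (hspec t ht)

end FunctionalCalculus

theorem MemGTA.exists_mul_mem {Ω : Set (NonUnitalStarSubalgebra ℂ A)} (h : MemGTA Ω)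
    {η δ : ℝ} (hη : 0 < η) (hδ : 0 < δ) (hηδ : η < 1 - δ) {ι : Type*} [Finite ι] (x : ι → A)
    {a : A} (ha : IsPos a) (ha1 : ‖a‖ = 1) :
    ∃ y : ι → A, ∃ B ∈ Ω, IsClosed (B : Set A) ∧
      ∃ r ∈ B, IsPos r ∧ ‖r‖ ≤ 1 ∧
        (∀ j, ‖y j - x j‖ < 2 * (η⁻¹ * δ)) ∧
        (∀ j, r * y j ∈ B ∧ y j * r ∈ B) ∧
        (∀ j, ‖r * x j - x j * r‖ < δ + 2 * ((η + δ) * ‖x j‖)) ∧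
        CuntzBelow (1 - r) a ∧
        1 - (δ + 2 * (η + δ)) ≤ ‖r * a * r‖ := by
  let _ := CStarAlgebra.spectralOrder A
  have := CStarAlgebra.spectralOrderedRing A
  have : Nontrivial A := nontrivial_of_ne a 0 (norm_ne_zero_iff.1 (ha1 ▸ one_ne_zero))
  obtain ⟨B, hBΩ, hB, s, hsB, hs, hs1, happrox, hcomm, hcut, hnorm⟩ :=
    h δ hδ (Set.finite_range x).toFinset a 1 ha ha1 ⟨1, by simp⟩ norm_one.le
  simp only [Set.Finite.mem_toFinset, Set.forall_mem_range] at happrox hcomm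
  rw [mul_one, one_mul, mul_one] at hcut
  rw [isPos_iff_nonneg] at hs
  set r := cfc (ramp η (1 - δ)) s
  have hr1 : ‖r‖ ≤ 1 := norm_cfc_ramp_le_one hηδ
  have hrs : ‖r - s‖ ≤ η + δ := by
    simpa only [sub_sub_cancel] using
      norm_cfc_ramp_sub_self_le hs hs1 hη.le hηδ (sub_le_self 1 hδ.le)
  choose y hyx hyB using fun j => exists_near_cfc_mul_mem hB hsB hs (continuous_ramp (β := 1 - δ))
    hη (fun _ => ramp_of_le) (happrox j).1 (happrox j).2
  refine ⟨y, B, hBΩ, hB, r, cfc_mem_of_map_zero hB hsB continuous_ramp (ramp_of_le hη.le),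
    isPos_iff_nonneg.2 (cfc_nonneg fun t _ => (ramp_mem_Icc hηδ).1), hr1, hyx, hyB, fun j => ?_,
    hcut.one_sub_cfc_ramp hs.isSelfAdjoint hηδ, ?_⟩
  · have : ‖r - s‖ * ‖x j‖ ≤ (η + δ) * ‖x j‖ := by gcongr
    linarith [norm_commutator_le_add r s (x j), hcomm j]
  · linarith [norm_mul_mul_self_le_add hr1 hs1 ha1.le]

theorem exists_cutoff_parameters {ε M : ℝ} (hε : 0 < ε) (hM : 1 ≤ M) :
    ∃ η > 0, ∃ δ > 0, η < 1 - δ ∧ 2 * (η⁻¹ * δ) ≤ ε ∧ δ + 2 * ((η + δ) * M) ≤ ε := by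
  set η := min ε 1 / (8 * M) with hη_def
  have hη : 0 < η := by positivity
  have hηM : 8 * (η * M) = min ε 1 := by rw [hη_def]; field_simp
  have hηle : η ≤ η * M := le_mul_of_one_le_right hη.le hM
  have hηε : 8 * (η * M) ≤ ε := hηM.trans_le (min_le_left _ _)
  have hη1 : 8 * η ≤ 1 := by linarith [min_le_right ε 1]
  have hsq : η ^ 2 ≤ η := pow_le_of_le_one hη.le (by linarith) two_ne_zero
  have hsqM : η ^ 2 * M ≤ η * M := by gcongr
  refine ⟨η, hη, η ^ 2, by positivity, by linarith, ?_, by linarith⟩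
  rw [sq, inv_mul_cancel_left₀ hη.ne']
  linarith

theorem memGTA_exact_membership_general {Ω : Set (NonUnitalStarSubalgebra ℂ A)} (h : MemGTA Ω)
    {ε : ℝ} (hε : 0 < ε) {ι : Type*} [Finite ι] (x : ι → A) {a : A} (ha : IsPos a)
    (ha1 : ‖a‖ = 1) :
    ∃ y : ι → A, ∃ B ∈ Ω, IsClosed (B : Set A) ∧
      ∃ r ∈ B, IsPos r ∧ ‖r‖ ≤ 1 ∧
        (∀ j, ‖y j - x j‖ < ε) ∧
        (∀ j, r * y j ∈ B ∧ y j * r ∈ B) ∧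
        (∀ j, ‖r * x j - x j * r‖ < ε) ∧
        CuntzBelow (1 - r) a ∧
        1 - ε ≤ ‖r * a * r‖ := by
  obtain ⟨M, hM1, hxM⟩ : ∃ M : ℝ, 1 ≤ M ∧ ∀ j, ‖x j‖ ≤ M := by
    obtain ⟨C, hC⟩ := (Set.finite_range fun j => ‖x j‖).bddAbove
    exact ⟨max 1 C, le_max_left _ _, fun j => (hC ⟨j, rfl⟩).trans (le_max_right _ _)⟩
  obtain ⟨η, hη, δ, hδ, hηδ, hδη, hηM⟩ := exists_cutoff_parameters hε hM1
  obtain ⟨y, B, hBΩ, hB, r, hrB, hr, hr1, hyx, hyB, hcomm, hcuntz, hnorm⟩ :=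
    h.exists_mul_mem hη hδ hηδ x ha ha1
  refine ⟨y, B, hBΩ, hB, r, hrB, hr, hr1, fun j => (hyx j).trans_le hδη, hyB, fun j => ?_,
    hcuntz, ?_⟩
  · calc ‖r * x j - x j * r‖ < δ + 2 * ((η + δ) * ‖x j‖) := hcomm j
      _ ≤ δ + 2 * ((η + δ) * M) := by gcongr; exact hxM j
      _ ≤ ε := hηM
  · have : η + δ ≤ (η + δ) * M := le_mul_of_one_le_right (by positivity) hM1
    linarith

/-- If `A` is a simple unital C*-algebra in `GTAΩ`, then for any
`ε > 0`, finitely many `x₁, …, x_m ∈ A` and positive `a` of norm one there are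
`y₁, …, y_m ∈ A`, a C*-subalgebra `B ∈ Ω` and a positive contraction `r ∈ B` with
`‖y j - x j‖ < ε`, `r * y j ∈ B`, `y j * r ∈ B`, `‖r * x j - x j * r‖ < ε`,
`1 - r ≾_A a` and `‖r * a * r‖ ≥ 1 - ε`. -/
theorem memGTA_exact_membership
    (hA : IsSimpleCStarAlgebra A)
    (Ω : Set (NonUnitalStarSubalgebra ℂ A))
    (h : MemGTA Ω) :
    ∀ ε : ℝ, 0 < ε → ∀ m : ℕ, 0 < m → ∀ x : Fin m → A, ∀ a : A, IsPos a → ‖a‖ = 1 →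
      ∃ y : Fin m → A, ∃ B ∈ Ω, IsClosed (B : Set A) ∧
        ∃ r ∈ B, IsPos r ∧ ‖r‖ ≤ 1 ∧
          (∀ j, ‖y j - x j‖ < ε) ∧
          (∀ j, r * y j ∈ B ∧ y j * r ∈ B) ∧
          (∀ j, ‖r * x j - x j * r‖ < ε) ∧
          CuntzBelow (1 - r) a ∧
          1 - ε ≤ ‖r * a * r‖ :=
  fun _ hε _ _ x _ ha ha1 => memGTA_exact_membership_general h hε x ha ha1
end
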